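/- Let (X_n, p_{n+1}) be a tower of fibrations of pointed spaces with a chosen basepoint of lim_n X_n, let k ≥ 0, and let α : I^k → lim_n X_n be a map sending ∂I^k to the basepoint whose class in π_k(lim_n X_n) lies in the kernel of P : π_k(lim_n X_n) → lim_n π_k X_n. Set α_n = P_n ∘ α. For any two choices (β_n)_{n≥0} and (β̄_n)_{n≥0} of nullhomotopies of the α_n, the families ([β_n * (p_{n+1}∘β_{n+1}^{-1})])_{n≥0} and ([β̄_n * (p_{n+1}∘β̄_{n+1}^{-1})])_{n≥0} of elements of π_{k+1}X_n lie in the same orbit of the lim¹ action, i.e., they represent the same element φ(α) of lim¹_n π_{k+1}X_n. -/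

import Mathlib

open scoped unitInterval Topology Topology.Homotopy

noncomputable section

/-- A map is a *Serre fibration* if it has the homotopy lifting property
with respect to all cubes `I^k`. -/
def IsSerreFibration {E B : Type} [TopologicalSpace E] [TopologicalSpace B]
    (p : C(E, B)) : Prop :=
  ∀ (k : ℕ) (f : C((Fin k → I), E)) (H : C(I × (Fin k → I), B)),
    (∀ q, H (0, q) = p (f q)) →
      ∃ G : C(I × (Fin k → I), E),
        (∀ q, G (0, q) = f q) ∧ ∀ z, p (G z) = H z

/-- The inverse limit of a tower of spaces. -/
def TowerLim (X : ℕ → Type) [∀ n, TopologicalSpace (X n)]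
    (p : ∀ n, C(X (n + 1), X n)) : Type :=
  { z : ∀ n, X n // ∀ n, p n (z (n + 1)) = z n }

instance {X : ℕ → Type} [∀ n, TopologicalSpace (X n)] (p : ∀ n, C(X (n + 1), X n)) :
    TopologicalSpace (TowerLim X p) :=
  instTopologicalSpaceSubtype

/-- The projection from the inverse limit of a tower to the `n`th space. -/
def TowerLim.proj {X : ℕ → Type} [∀ n, TopologicalSpace (X n)]
    {p : ∀ n, C(X (n + 1), X n)} (n : ℕ) : C(TowerLim X p, X n) :=
  ⟨fun z => z.1 n, (continuous_apply n).comp continuous_subtype_val⟩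

/-- The map induced on homotopy groups (in particular on `π_k` for `N = Fin k`)
by a continuous map `f` with `f x = y`. -/
def piMap {X Y : Type} [TopologicalSpace X] [TopologicalSpace Y] (N : Type)
    (f : C(X, Y)) {x : X} {y : Y} (hf : f x = y) :
    HomotopyGroup N X x → HomotopyGroup N Y y :=
  Quotient.map
    (fun g => (⟨f.comp g.1, fun q hq => by
        rw [ContinuousMap.comp_apply, g.2 q hq, hf]⟩ : GenLoop N Y y))
    (fun g h H => H.map fun F => F.compContinuousMap f)


/-- The map `π_k (lim_n X_n) → π_k (X n)` induced by the projection `TowerLim.proj n`,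
for the basepoint `⟨x, hx⟩` of the inverse limit. -/
def piProjMap {X : ℕ → Type} [∀ n, TopologicalSpace (X n)] {p : ∀ n, C(X (n + 1), X n)}
    (k : ℕ) {x : ∀ n, X n} (hx : ∀ n, p n (x (n + 1)) = x n) (n : ℕ) :
    HomotopyGroup (Fin k) (TowerLim X p) (⟨x, hx⟩ : TowerLim X p) →
      HomotopyGroup (Fin k) (X n) (x n) :=
  piMap (Fin k) (TowerLim.proj n) rfl

/-- The map `π_k (X (n+1)) → π_k (X n)` induced by the map `p n` of the tower. -/
def piTowerMap {X : ℕ → Type} [∀ n, TopologicalSpace (X n)] {p : ∀ n, C(X (n + 1), X n)}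
    (k : ℕ) {x : ∀ n, X n} (hx : ∀ n, p n (x (n + 1)) = x n) (n : ℕ) :
    HomotopyGroup (Fin k) (X (n + 1)) (x (n + 1)) → HomotopyGroup (Fin k) (X n) (x n) :=
  piMap (Fin k) (p n) (hx n)

/-- The distinguished basepoint of `HomotopyGroup N X x`: the class of the constant map. -/
def piConst {X : Type} [TopologicalSpace X] (N : Type) (x : X) : HomotopyGroup N X x :=
  ⟦GenLoop.const⟧

/-- The class in `HomotopyGroup N X x` of a generalized loop. -/
def piCls {N X : Type} [TopologicalSpace X] {x : X} (g : GenLoop N X x) :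
    HomotopyGroup N X x :=
  ⟦g⟧

/-- The generalized loop obtained by composing a generalized loop with a continuous map
`f` satisfying `f x = y`. -/
def genLoopMap {X Y : Type} [TopologicalSpace X] [TopologicalSpace Y] (N : Type)
    (f : C(X, Y)) {x : X} {y : Y} (hf : f x = y) (g : GenLoop N X x) : GenLoop N Y y :=
  ⟨f.comp g.1, fun q hq => by rw [ContinuousMap.comp_apply, g.2 q hq, hf]⟩

/-- `β : I^{k+1} → X` is a *nullhomotopy* of the generalized loop `α : I^k → X`
(writing points of `I^{k+1}` as `(p, t)` with `t` the last coordinate):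
`β (p, 0) = x` for all `p`, `β (p, 1) = α p` for all `p`, and `β (p, t) = x`
for all `p ∈ ∂I^k`. -/
def IsNullhomotopy {k : ℕ} {X : Type} [TopologicalSpace X] {x : X}
    (α : GenLoop (Fin k) X x) (β : C((Fin (k + 1) → I), X)) : Prop :=
  (∀ q : Fin (k + 1) → I, q (Fin.last k) = 0 → β q = x) ∧
  (∀ q : Fin (k + 1) → I, q (Fin.last k) = 1 → β q = α fun i => q i.castSucc) ∧
  (∀ q : Fin (k + 1) → I, (∃ i : Fin k, q i.castSucc = 0 ∨ q i.castSucc = 1) → β q = x)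

/-- `c = β * (f ∘ β'⁻¹)` : the concatenation, in the last coordinate of the cube `I^{k+1}`,
of `β` with the reverse (in the last coordinate) of `f ∘ β'`. -/
def IsGluedWithReverse {k : ℕ} {X Y : Type} [TopologicalSpace X] [TopologicalSpace Y]
    (β : C((Fin (k + 1) → I), X)) (f : C(Y, X)) (β' : C((Fin (k + 1) → I), Y))
    (c : (Fin (k + 1) → I) → X) : Prop :=
  ∀ q : Fin (k + 1) → I, c q =
    if (q (Fin.last k) : ℝ) ≤ 1 / 2 then
      β (Function.update q (Fin.last k)
        (Set.projIcc 0 1 zero_le_one (2 * (q (Fin.last k) : ℝ))))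
    else
      f (β' (Function.update q (Fin.last k)
        (Set.projIcc 0 1 zero_le_one (2 - 2 * (q (Fin.last k) : ℝ)))))

/-!
Two nullhomotopies `β`, `γ` of the same loop have a difference class `d(β, γ) = [β * γ⁻¹]`, which
satisfies the cocycle identity `d(β, γ) * d(γ, δ) = d(β, δ)` and is natural in the space. Taking
`g_n = d(β̄_n, β_n)`, the cocycle identity reduces both `d(β̄_n, p β̄_{n+1}) * p_*(g_{n+1})` and
`g_n * d(β_n, p β_{n+1})` to `d(β̄_n, p β_{n+1})`, products being in the order of concatenation.
-/

theorem homotopic_trans_symm_trans_trans {S : Type*} [TopologicalSpace S] {a b c d : S}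
    (p : Path a b) (q : Path c b) (r : Path b d) :
    ((p.trans q.symm).trans (q.trans r)).Homotopic (p.trans r) := by
  rw [← Path.Homotopic.Quotient.eq]
  simp only [Path.Homotopic.Quotient.mk_trans, Path.Homotopic.Quotient.mk_symm,
    Path.Homotopic.Quotient.trans_assoc]
  rw [← Path.Homotopic.Quotient.trans_assoc (.symm _), Path.Homotopic.Quotient.symm_trans,
    Path.Homotopic.Quotient.refl_trans]

theorem update_funSplitAt_symm {N Y : Type*} [DecidableEq N] [TopologicalSpace Y] (i : N) (t s : Y)
    (z : {j // j ≠ i} → Y) :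
    Function.update ((Homeomorph.funSplitAt Y i).symm (t, z)) i s =
      (Homeomorph.funSplitAt Y i).symm (s, z) := by
  ext j
  by_cases hj : j = i
  · subst hj
    simp
  · simp [hj]

section DifferenceClass

variable {N X : Type*} [DecidableEq N] [TopologicalSpace X] {x : X} {i : N}

variable (i) in
/-- The class in the homotopy group of a loop of generalized loops; the loop parameter becomes the
`i`th coordinate of the cube. -/
def loopClass (p : Path (GenLoop.const : GenLoop {j // j ≠ i} X x) GenLoop.const) :
    HomotopyGroup N X x :=
  ⟦GenLoop.fromLoop i p⟧

theorem loopClass_eq_of_homotopic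
    {p q : Path (GenLoop.const : GenLoop {j // j ≠ i} X x) GenLoop.const} (h : p.Homotopic q) :
    loopClass i p = loopClass i q :=
  Quotient.sound (GenLoop.homotopicFrom i (by rwa [GenLoop.to_from, GenLoop.to_from]))

-- The factors swap because Mathlib's product on homotopy groups reverses concatenation.
theorem loopClass_trans [Nonempty N]
    (p q : Path (GenLoop.const : GenLoop {j // j ≠ i} X x) GenLoop.const) :
    loopClass i (p.trans q) = loopClass i q * loopClass i p := by
  refine Eq.trans ?_ (HomotopyGroup.mul_spec (i := i)).symm
  rw [← GenLoop.fromLoop_trans_toLoop, GenLoop.to_from, GenLoop.to_from, loopClass]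

variable (i) in
/-- The difference class `[p * q⁻¹]` of two nullhomotopies `p`, `q` of the same generalized loop
`γ`, given as paths from the constant loop to `γ`. -/
def differenceClass {γ : GenLoop {j // j ≠ i} X x} (p q : Path GenLoop.const γ) :
    HomotopyGroup N X x :=
  loopClass i (p.trans q.symm)

variable [Nonempty N] {γ : GenLoop {j // j ≠ i} X x}

theorem differenceClass_mul_differenceClass (p q r : Path GenLoop.const γ) :
    differenceClass i q r * differenceClass i p q = differenceClass i p r :=
  (loopClass_trans _ _).symm.trans <|
    loopClass_eq_of_homotopic <| homotopic_trans_symm_trans_trans p q r.symm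

theorem differenceClass_eq_inv_mul_mul (p p' q q' : Path GenLoop.const γ) :
    differenceClass i p' q' =
      (differenceClass i q' q)⁻¹ * differenceClass i p q * differenceClass i p' p := by
  rw [mul_assoc, eq_inv_mul_iff_mul_eq, differenceClass_mul_differenceClass,
    differenceClass_mul_differenceClass]

end DifferenceClass

theorem piMap_differenceClass {N X Y : Type} [DecidableEq N] [TopologicalSpace X]
    [TopologicalSpace Y] {x : X} {y : Y} {i : N} {γ : GenLoop {j // j ≠ i} X x}
    {δ : GenLoop {j // j ≠ i} Y y} (f : C(X, Y)) (hf : f x = y)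
    {p q : Path GenLoop.const γ} {p' q' : Path GenLoop.const δ}
    (hp : ∀ t, genLoopMap _ f hf (p t) = p' t) (hq : ∀ t, genLoopMap _ f hf (q t) = q' t) :
    piMap N f hf (differenceClass i p q) = differenceClass i p' q' := by
  refine congrArg (Quotient.mk _) (GenLoop.ext _ _ fun z => ?_)
  change f (GenLoop.fromLoop i _ z) = _
  rw [GenLoop.fromLoop_apply, GenLoop.fromLoop_apply, Path.trans_apply, Path.trans_apply]
  split_ifs
  · exact DFunLike.congr_fun (hp _) _
  · exact DFunLike.congr_fun (hq _) _

section Nullhomotopy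

variable {k : ℕ} {X Y : Type} [TopologicalSpace X] [TopologicalSpace Y] {x : X} {y : Y}
  {α : GenLoop (Fin k) X x}

/-- The generalized loop `α` with its coordinates renamed to those of the last face of `I^{k+1}`,
as required for the endpoint of a path to which `GenLoop.fromLoop (Fin.last k)` applies. -/
def lastFaceLoop (α : GenLoop (Fin k) X x) : GenLoop {j // j ≠ Fin.last k} X x :=
  GenLoop.congr x (finSuccAboveEquiv (Fin.last k)) α

theorem lastFaceLoop_apply (α : GenLoop (Fin k) X x) (z : {j // j ≠ Fin.last k} → I) :
    lastFaceLoop α z = α fun i => Cube.insertAt (Fin.last k) (1, z) i.castSucc := by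
  change α _ = α _
  congr 1
  ext i
  simp [finSuccAboveEquiv_apply, (Fin.castSucc_lt_last i).ne]

namespace IsNullhomotopy

/-- A nullhomotopy, regarded as a path of generalized loops parametrized by the last coordinate
of the cube. -/
def path {β : C((Fin (k + 1) → I), X)} (h : IsNullhomotopy α β) :
    Path GenLoop.const (lastFaceLoop α) where
  toFun t := ⟨(β.comp (Cube.insertAt (Fin.last k))).curry t, by
    rintro z ⟨⟨j, hj⟩, hz⟩
    refine h.2.2 _ ⟨j.castPred hj, ?_⟩
    simpa [hj] using hz⟩
  continuous_toFun := by exact (ContinuousMap.continuous _).subtype_mk _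
  source' := by
    ext z
    exact h.1 _ (by simp)
  target' := by
    ext z
    exact (h.2.1 _ (by simp)).trans (lastFaceLoop_apply α z).symm

theorem comp {α' : GenLoop (Fin k) Y y} {β : C((Fin (k + 1) → I), X)} (h : IsNullhomotopy α β)
    (f : C(X, Y)) (hf : f x = y) (hα : genLoopMap (Fin k) f hf α = α') :
    IsNullhomotopy α' (f.comp β) := by
  subst hα
  exact ⟨fun q hq => (congrArg f (h.1 q hq)).trans hf, fun q hq => congrArg f (h.2.1 q hq),
    fun q hq => (congrArg f (h.2.2 q hq)).trans hf⟩

theorem piMap_differenceClass_path {α' : GenLoop (Fin k) Y y} {β γ : C((Fin (k + 1) → I), X)}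
    (hβ : IsNullhomotopy α β) (hγ : IsNullhomotopy α γ) (f : C(X, Y)) (hf : f x = y)
    (hα : genLoopMap (Fin k) f hf α = α') :
    piMap (Fin (k + 1)) f hf (differenceClass (Fin.last k) hβ.path hγ.path) =
      differenceClass (Fin.last k) (hβ.comp f hf hα).path (hγ.comp f hf hα).path :=
  piMap_differenceClass f hf (fun _ => rfl) fun _ => rfl

end IsNullhomotopy

namespace IsGluedWithReverse

variable {β : C((Fin (k + 1) → I), X)} {f : C(Y, X)} {β' : C((Fin (k + 1) → I), Y)}
  {c : GenLoop (Fin (k + 1)) X x}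

theorem toLoop_eq (hc : IsGluedWithReverse β f β' c) (h : IsNullhomotopy α β)
    (h' : IsNullhomotopy α (f.comp β')) :
    GenLoop.toLoop (Fin.last k) c = h.path.trans h'.path.symm := by
  ext t z
  have ht : Cube.insertAt (Fin.last k) (t, z) (Fin.last k) = t := by simp
  rw [GenLoop.toLoop_apply, hc, Path.trans_apply, ht, update_funSplitAt_symm,
    update_funSplitAt_symm]
  split_ifs with hle
  · rw [Set.projIcc_of_mem zero_le_one
      ((unitInterval.mul_pos_mem_iff zero_lt_two).2 ⟨t.2.1, hle⟩)]
    rfl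
  · have hσ : Set.projIcc 0 1 zero_le_one (2 - 2 * (t : ℝ)) =
        σ ⟨2 * t - 1, unitInterval.two_mul_sub_one_mem_iff.2 ⟨(not_le.1 hle).le, t.2.2⟩⟩ := by
      rw [Set.projIcc_of_mem zero_le_one ⟨by linarith [t.2.2], by linarith⟩]
      ext
      simp only [unitInterval.coe_symm_eq]
      ring
    rw [hσ]
    rfl

theorem piCls_eq_differenceClass (hc : IsGluedWithReverse β f β' c) (h : IsNullhomotopy α β)
    (h' : IsNullhomotopy α (f.comp β')) :
    piCls c = differenceClass (Fin.last k) h.path h'.path := by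
  rw [differenceClass, ← hc.toLoop_eq h h']
  exact congrArg piCls ((GenLoop.loopHomeo (Fin.last k)).symm_apply_apply c).symm

end IsGluedWithReverse

end Nullhomotopy

theorem genLoopMap_proj_succ {N : Type} {X : ℕ → Type} [∀ n, TopologicalSpace (X n)]
    {p : ∀ n, C(X (n + 1), X n)} {x : ∀ n, X n} (hx : ∀ n, p n (x (n + 1)) = x n)
    (α : GenLoop N (TowerLim X p) (⟨x, hx⟩ : TowerLim X p)) (n : ℕ) :
    genLoopMap N (p n) (hx n) (genLoopMap N (TowerLim.proj (n + 1)) rfl α) =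
      genLoopMap N (TowerLim.proj n) rfl α :=
  GenLoop.ext _ _ fun q => (α.1 q).2 n

theorem phi_independent_of_nullhomotopies_general
    {X : ℕ → Type} [∀ n, TopologicalSpace (X n)] {p : ∀ n, C(X (n + 1), X n)}
    {x : ∀ n, X n} (hx : ∀ n, p n (x (n + 1)) = x n) {k : ℕ}
    (α : GenLoop (Fin k) (TowerLim X p) (⟨x, hx⟩ : TowerLim X p))
    (β β' : ∀ n, C((Fin (k + 1) → I), X n))
    (hβ : ∀ n, IsNullhomotopy (genLoopMap (Fin k) (TowerLim.proj n) rfl α) (β n))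
    (hβ' : ∀ n, IsNullhomotopy (genLoopMap (Fin k) (TowerLim.proj n) rfl α) (β' n))
    (c c' : ∀ n, GenLoop (Fin (k + 1)) (X n) (x n))
    (hc : ∀ n, IsGluedWithReverse (β n) (p n) (β (n + 1)) (c n))
    (hc' : ∀ n, IsGluedWithReverse (β' n) (p n) (β' (n + 1)) (c' n)) :
    ∃ g : ∀ n, HomotopyGroup (Fin (k + 1)) (X n) (x n),
      ∀ n, piCls (c' n)
        = (piTowerMap (k + 1) hx n (g (n + 1)))⁻¹ * piCls (c n) * g n := by
  refine ⟨fun n => differenceClass (Fin.last k) (hβ' n).path (hβ n).path, fun n => ?_⟩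
  have hα := genLoopMap_proj_succ hx α n
  have hpβ := (hβ (n + 1)).comp (p n) (hx n) hα
  have hpβ' := (hβ' (n + 1)).comp (p n) (hx n) hα
  have hpg : piTowerMap (k + 1) hx n
      (differenceClass (Fin.last k) (hβ' (n + 1)).path (hβ (n + 1)).path) =
        differenceClass (Fin.last k) hpβ'.path hpβ.path :=
    (hβ' (n + 1)).piMap_differenceClass_path (hβ (n + 1)) (p n) (hx n) hα
  rw [hpg, (hc n).piCls_eq_differenceClass (hβ n) hpβ,
    (hc' n).piCls_eq_differenceClass (hβ' n) hpβ']
  exact differenceClass_eq_inv_mul_mul _ _ _ _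

/-- **Proposition 4.3 (well-definedness of `φ`).**  Let `(X n, p n)` be a tower of
fibrations of pointed topological spaces, with basepoints the components `x n` of a chosen
point of the inverse limit, let `k ≥ 0`, and let `α : I^k → lim_n X_n` be a map sending
`∂I^k` to the basepoint whose class lies in the kernel of
`P : π_k (lim_n X_n) → lim_n π_k X_n`.  For any two choices `β`, `β̄` of families of
nullhomotopies of the maps `α_n = P_n ∘ α`, the corresponding families
`([β_n * (p_{n+1} ∘ β_{n+1}⁻¹)])_n` and `([β̄_n * (p_{n+1} ∘ β̄_{n+1}⁻¹)])_n` of elements of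
`π_{k+1} X_n` lie in the same orbit of the `lim¹` action, i.e. they represent the same
element `φ(α)` of `lim¹_n π_{k+1} X_n`.  (Here the orbit relation
`h' = g · h · ((p_{n+1})_* g)⁻¹`, written with homotopy classes composed in the order of
concatenation of cubes, reads `piCls (c̄ n) = (πp (g (n+1)))⁻¹ * piCls (c n) * g n` in terms
of Mathlib's multiplication on homotopy groups, which composes in the opposite order.) -/
theorem phi_independent_of_nullhomotopies
    (X : ℕ → Type) [∀ n, TopologicalSpace (X n)] (p : ∀ n, C(X (n + 1), X n))
    (hfib : ∀ n, IsSerreFibration (p n))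
    (x : ∀ n, X n) (hx : ∀ n, p n (x (n + 1)) = x n)
    (k : ℕ)
    (α : GenLoop (Fin k) (TowerLim X p) (⟨x, hx⟩ : TowerLim X p))
    (hker : ∀ n, piProjMap k hx n (piCls α) = piConst (Fin k) (x n))
    (β β' : ∀ n, C((Fin (k + 1) → I), X n))
    (hβ : ∀ n, IsNullhomotopy (genLoopMap (Fin k) (TowerLim.proj n) rfl α) (β n))
    (hβ' : ∀ n, IsNullhomotopy (genLoopMap (Fin k) (TowerLim.proj n) rfl α) (β' n))
    (c c' : ∀ n, GenLoop (Fin (k + 1)) (X n) (x n))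
    (hc : ∀ n, IsGluedWithReverse (β n) (p n) (β (n + 1)) (c n))
    (hc' : ∀ n, IsGluedWithReverse (β' n) (p n) (β' (n + 1)) (c' n)) :
    ∃ g : ∀ n, HomotopyGroup (Fin (k + 1)) (X n) (x n),
      ∀ n, piCls (c' n)
        = (piTowerMap (k + 1) hx n (g (n + 1)))⁻¹ * piCls (c n) * g n :=
  phi_independent_of_nullhomotopies_general hx α β β' hβ hβ' c c' hc hc'

end
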